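/- Let X be a finite set, π a probability measure on X, ψ : X → 2^X a variable valuation with π(⟦ψ⟧) > 0. For A ⊆ X define Bel^π_ψ(A) = π({x ∈ X : ψ(x) ⊆ A} | ⟦ψ⟧). Then for all disjoint A, B ⊆ X, Bel^π_ψ(A ∪ B) ≥ Bel^π_ψ(A) + Bel^π_ψ(B). -/

import Mathlib

/-- The truth set of a variable valuation `p : X → Set X`. -/
def truthSet {X : Type*} (p : X → Set X) : Set X := {x | x ∈ p x}

/-- The probability of an event `A ⊆ X` under a weight function `π` on a finite set `X`. -/
noncomputable def pr {X : Type*} [Fintype X] (π : X → ℝ) (A : Set X) : ℝ :=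
  ∑ x, A.indicator π x

/-- Conditional probability `π(B | C) = π(B ∩ C) / π(C)`. -/
noncomputable def condProb {X : Type*} [Fintype X] (π : X → ℝ) (B C : Set X) : ℝ :=
  pr π (B ∩ C) / pr π C

/-- Evidentially supported belief: `Bel^π_ψ(A) = π({x : ψ(x) ⊆ A} | ⟦ψ⟧)`. -/
noncomputable def bel {X : Type*} [Fintype X] (π : X → ℝ) (ψ : X → Set X) (A : Set X) : ℝ :=
  condProb π {x | ψ x ⊆ A} (truthSet ψ)

/-- The mass function `m^π_ψ(A) = π(ψ⁻¹(A) | ⟦ψ⟧)`. -/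
noncomputable def mass {X : Type*} [Fintype X] (π : X → ℝ) (ψ : X → Set X) (A : Set X) : ℝ :=
  condProb π {x | ψ x = A} (truthSet ψ)

theorem pr_mono {X : Type*} [Fintype X] {π : X → ℝ} (hnn : ∀ x, 0 ≤ π x) {A B : Set X}
    (h : A ⊆ B) : pr π A ≤ pr π B :=
  Finset.sum_le_sum fun x _ => Set.indicator_le_indicator_of_subset h hnn x

theorem pr_union {X : Type*} [Fintype X] (π : X → ℝ) {A B : Set X} (h : Disjoint A B) :
    pr π (A ∪ B) = pr π A + pr π B := by
  simp only [pr, Set.indicator_union_of_disjoint h, Finset.sum_add_distrib]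

theorem bel_superadditive {X : Type*} [Fintype X] (π : X → ℝ)
    (hnn : ∀ x, 0 ≤ π x) (hsum : ∑ x, π x = 1)
    (ψ : X → Set X) (hψ : 0 < pr π (truthSet ψ))
    (A B : Set X) (hAB : Disjoint A B) :
    bel π ψ A + bel π ψ B ≤ bel π ψ (A ∪ B) := by
  have hdisj : Disjoint ({x | ψ x ⊆ A} ∩ truthSet ψ) ({x | ψ x ⊆ B} ∩ truthSet ψ) :=
    Set.disjoint_left.2 fun _ hA hB => Set.disjoint_left.1 hAB (hA.1 hA.2) (hB.1 hB.2)
  have hsub : {x | ψ x ⊆ A} ∩ truthSet ψ ∪ {x | ψ x ⊆ B} ∩ truthSet ψ ⊆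
      {x | ψ x ⊆ A ∪ B} ∩ truthSet ψ :=
    Set.union_subset
      (fun _ h => ⟨h.1.trans Set.subset_union_left, h.2⟩)
      (fun _ h => ⟨h.1.trans Set.subset_union_right, h.2⟩)
  rw [bel, bel, bel, condProb, condProb, condProb, ← add_div, ← pr_union π hdisj]
  exact div_le_div_of_nonneg_right (pr_mono hnn hsub) hψ.le
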